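/- Gauss' digamma formula in the form: for integers m ≥ 2 and 1 ≤ j ≤ m-1, ψ(j/m) = -γ - log(2πm) - (π/2)·cot(πj/m) - 2·∑_{r=1}^{m-1} cos(2πjr/m)·log Γ(r/m). -/

import Mathlib

/-!
The values of `ψ = digamma` at `1/m, …, m/m` are recovered from their finite cosine transform.

Log-convexity of `Γ` gives `log x - 1/x ≤ ψ x ≤ log x`, which together with `ψ (x + 1) = ψ x + 1/x`
yields `ψ x = lim (log n - ∑_{k < n} 1 / (x + k))` (`tendsto_digamma`). Multiplying by
`cos (2π r i / m)` and summing over `x = i / m`, `1 ≤ i ≤ m`, the residue classes interleave into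
the single series `∑ cos (2π r l / m) / l`. For `0 < r < m` the logarithms cancel, and Abel's limit
theorem evaluates the series as `-log (2 sin (π r / m))` (`sum_cos_mul_digamma`); for `r = 0` the
harmonic numbers produce `γ + log m` (`sum_digamma`).

A cosine transform only sees the even part, so inverting it gives `ψ (j/m) + ψ (1 - j/m)`
(`digamma_add_digamma_one_sub`). The difference `ψ (j/m) - ψ (1 - j/m)` is the logarithmic
derivative of `Γ x Γ (1 - x) = π / sin (π x)` and contributes the cotangent. The same reflection
formula turns the `log sin` sum into the `log Γ` sum of the statement (`sum_cos_mul_log_sin`).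
-/

noncomputable def digamma (x : ℝ) : ℝ := deriv Real.Gamma x / Real.Gamma x

open Filter Topology Finset

/-! ### The digamma function on the positive reals -/

lemma differentiableAt_Gamma_of_pos {x : ℝ} (hx : 0 < x) : DifferentiableAt ℝ Real.Gamma x :=
  Real.differentiableAt_Gamma fun k => by
    have : (0 : ℝ) ≤ k := k.cast_nonneg
    linarith

lemma hasDerivAt_log_Gamma {x : ℝ} (hx : 0 < x) :
    HasDerivAt (Real.log ∘ Real.Gamma) (digamma x) x :=
  (differentiableAt_Gamma_of_pos hx).hasDerivAt.log (Real.Gamma_pos_of_pos hx).ne'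

lemma log_Gamma_add_one {x : ℝ} (hx : 0 < x) :
    Real.log (Real.Gamma (x + 1)) = Real.log (Real.Gamma x) + Real.log x := by
  rw [Real.Gamma_add_one hx.ne', Real.log_mul hx.ne' (Real.Gamma_pos_of_pos hx).ne', add_comm]

lemma digamma_add_one {x : ℝ} (hx : 0 < x) : digamma (x + 1) = digamma x + 1 / x := by
  have h1 : HasDerivAt (fun y => (Real.log ∘ Real.Gamma) (y + 1)) (digamma (x + 1)) x :=
    (hasDerivAt_log_Gamma (by linarith : 0 < x + 1)).comp_add_const x 1
  have h2 : HasDerivAt (fun y => (Real.log ∘ Real.Gamma) y + Real.log y)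
      (digamma x + x⁻¹) x := (hasDerivAt_log_Gamma hx).add (Real.hasDerivAt_log hx.ne')
  have h3 := h2.congr_of_eventuallyEq
    (f₁ := fun y => (Real.log ∘ Real.Gamma) (y + 1)) (by
      filter_upwards [lt_mem_nhds hx] with y hy using log_Gamma_add_one hy)
  rw [one_div]
  exact h1.unique h3

/-- By convexity of `log Γ`, its derivative at `x` is at most its slope `log x` on `[x, x + 1]`. -/
lemma digamma_le_log {x : ℝ} (hx : 0 < x) : digamma x ≤ Real.log x := by
  have h := Real.convexOn_log_Gamma.le_slope_of_hasDerivAt (Set.mem_Ioi.2 hx)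
    (Set.mem_Ioi.2 (by linarith : 0 < x + 1)) (by linarith) (hasDerivAt_log_Gamma hx)
  simpa [slope_def_field, log_Gamma_add_one hx] using h

/-- By convexity of `log Γ`, its slope `log x` on `[x, x + 1]` is at most `ψ (x + 1)`. -/
lemma log_sub_inv_le_digamma {x : ℝ} (hx : 0 < x) : Real.log x - 1 / x ≤ digamma x := by
  have h := Real.convexOn_log_Gamma.slope_le_of_hasDerivAt (Set.mem_Ioi.2 hx)
    (Set.mem_Ioi.2 (by linarith : 0 < x + 1)) (by linarith)
    (hasDerivAt_log_Gamma (by linarith : 0 < x + 1))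
  rw [digamma_add_one hx] at h
  have : Real.log x ≤ digamma x + 1 / x := by
    simpa [slope_def_field, log_Gamma_add_one hx] using h
  linarith

lemma digamma_add_nat {x : ℝ} (hx : 0 < x) (n : ℕ) :
    digamma (x + n) = digamma x + ∑ k ∈ range n, 1 / (x + k) := by
  induction n with
  | zero => simp
  | succ n ih =>
    rw [sum_range_succ, ← add_assoc, ← ih, ← digamma_add_one (by positivity)]
    push_cast
    rw [add_assoc]

lemma tendsto_digamma {x : ℝ} (hx : 0 < x) :
    Tendsto (fun n : ℕ => Real.log n - ∑ k ∈ range n, 1 / (x + k)) atTop (𝓝 (digamma x)) := by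
  have hcast : Tendsto (fun n : ℕ => x + (n : ℝ)) atTop atTop :=
    tendsto_atTop_add_const_left _ _ tendsto_natCast_atTop_atTop
  have h1 : Tendsto (fun n : ℕ => digamma (x + n) - Real.log (x + n)) atTop (𝓝 0) := by
    have h0 : Tendsto (fun n : ℕ => -(1 / (x + (n : ℝ)))) atTop (𝓝 0) := by
      simpa using (tendsto_inv_atTop_zero.comp hcast).neg
    refine tendsto_of_tendsto_of_tendsto_of_le_of_le h0 tendsto_const_nhds ?_ ?_
    · intro n
      have := log_sub_inv_le_digamma (by positivity : 0 < x + n)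
      simp only
      linarith
    · intro n
      have := digamma_le_log (by positivity : 0 < x + n)
      simp only
      linarith
  have h2 : Tendsto (fun n : ℕ => Real.log (x + n) - Real.log n) atTop (𝓝 0) := by
    have h3 : Tendsto (fun n : ℕ => x / (n : ℝ) + 1) atTop (𝓝 (0 + 1)) :=
      (tendsto_const_div_atTop_nhds_zero_nat x).add_const 1
    have h4 := (Real.continuousAt_log (by norm_num : (0 : ℝ) + 1 ≠ 0)).tendsto.comp h3
    rw [zero_add, Real.log_one] at h4
    refine h4.congr' ?_
    filter_upwards [eventually_gt_atTop 0] with n hn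
    have hn' : (0 : ℝ) < n := by exact_mod_cast hn
    rw [← Real.log_div (by positivity) hn'.ne', add_div, div_self hn'.ne']
    rfl
  have h5 := (h1.add h2).const_sub (digamma x)
  rw [add_zero, sub_zero] at h5
  refine h5.congr fun n => ?_
  rw [digamma_add_nat hx]
  ring

lemma digamma_reflection {x : ℝ} (h0 : 0 < x) (h1 : x < 1) :
    digamma x - digamma (1 - x) = -(Real.pi * Real.cot (Real.pi * x)) := by
  have hs : 0 < Real.sin (Real.pi * x) :=
    Real.sin_pos_of_pos_of_lt_pi (by positivity) (by nlinarith [Real.pi_pos])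
  have d1 : HasDerivAt (fun y => (Real.log ∘ Real.Gamma) y + (Real.log ∘ Real.Gamma) (1 - y))
      (digamma x + -digamma (1 - x)) x :=
    (hasDerivAt_log_Gamma h0).add
      ((hasDerivAt_log_Gamma (by linarith : 0 < 1 - x)).comp_const_sub 1 x)
  have d2 : HasDerivAt (fun y => Real.log Real.pi - Real.log (Real.sin (Real.pi * y)))
      (-(Real.cos (Real.pi * x) * (Real.pi * 1) / Real.sin (Real.pi * x))) x :=
    ((((hasDerivAt_id x).const_mul Real.pi).sin).log hs.ne').const_sub _
  have d3 := d2.congr_of_eventuallyEq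
    (f₁ := fun y => (Real.log ∘ Real.Gamma) y + (Real.log ∘ Real.Gamma) (1 - y)) (by
      filter_upwards [Ioo_mem_nhds h0 h1] with y hy
      have hy' : 0 < Real.sin (Real.pi * y) :=
        Real.sin_pos_of_pos_of_lt_pi (mul_pos Real.pi_pos hy.1) (by nlinarith [Real.pi_pos, hy.2])
      simp only [Function.comp]
      rw [← Real.log_mul (Real.Gamma_pos_of_pos hy.1).ne'
        (Real.Gamma_pos_of_pos (by linarith [hy.2])).ne', Real.Gamma_mul_Gamma_one_sub,
        Real.log_div Real.pi_ne_zero hy'.ne'])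
  have := d1.unique d3
  rw [← sub_eq_add_neg] at this
  rw [this, Real.cot_eq_cos_div_sin]
  ring

/-! ### Cosine sums -/

/-- The logarithm series on the unit circle away from `1`: it converges by Dirichlet's test, and
Abel's limit theorem identifies the sum. The term `i = 0` is zero because of division by zero. -/
lemma tendsto_log_series {z : ℂ} (hz : ‖z‖ = 1) (hz1 : z ≠ 1) :
    Tendsto (fun N : ℕ => ∑ i ∈ range N, z ^ i / (i : ℂ)) atTop (𝓝 (-Complex.log (1 - z))) := by
  have hz1' : z - 1 ≠ 0 := sub_ne_zero.2 hz1
  -- The index is shifted by one so that the coefficients `1 / (i + 1)` are antitone.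
  have hc : CauchySeq fun n : ℕ => ∑ i ∈ range n, (1 / ((i : ℝ) + 1)) • z ^ (i + 1) := by
    refine Antitone.cauchySeq_series_mul_of_tendsto_zero_of_bounded (b := 2 / ‖z - 1‖)
      (fun a b hab => Nat.one_div_le_one_div hab) tendsto_one_div_add_atTop_nhds_zero_nat ?_
    intro n
    simp_rw [pow_succ]
    rw [← sum_mul, geom_sum_eq hz1, norm_mul, hz, mul_one, norm_div]
    gcongr
    calc ‖z ^ n - 1‖ ≤ ‖z ^ n‖ + ‖(1 : ℂ)‖ := norm_sub_le _ _
      _ = 2 := by rw [norm_pow, hz]; norm_num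
  obtain ⟨l, hl⟩ := cauchySeq_tendsto_of_complete hc
  have hl' : Tendsto (fun N : ℕ => ∑ i ∈ range N, z ^ i / (i : ℂ)) atTop (𝓝 l) := by
    rw [← tendsto_add_atTop_iff_nat 1]
    refine hl.congr fun n => ?_
    rw [sum_range_succ']
    simp only [Complex.real_smul]
    push_cast
    rw [div_zero, add_zero]
    refine sum_congr rfl fun i _ => by ring
  have habel := Complex.tendsto_tsum_powerSeries_nhdsWithin_lt hl'
  rw [tendsto_map'_iff] at habel
  have hre : z.re < 1 := by
    refine lt_of_le_of_ne (hz ▸ Complex.re_le_norm z) fun h => hz1 ?_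
    have h2 := Complex.sq_norm z
    rw [hz, Complex.normSq_apply, h] at h2
    have h3 : z.im = 0 := by nlinarith
    exact Complex.ext h h3
  have hslit : 1 - z * ((1 : ℝ) : ℂ) ∈ Complex.slitPlane := by
    left; simpa using hre
  have hcont : ContinuousAt (fun x : ℝ => -Complex.log (1 - z * (x : ℂ))) 1 := by
    have : ContinuousAt (fun x : ℝ => 1 - z * (x : ℂ)) 1 := by fun_prop
    exact (this.clog hslit).neg
  have hlim : Tendsto (fun x : ℝ => -Complex.log (1 - z * (x : ℂ))) (𝓝[<] 1)
      (𝓝 (-Complex.log (1 - z))) := by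
    have := hcont.tendsto.mono_left (nhdsWithin_le_nhds (s := Set.Iio 1))
    simpa using this
  have heq : l = -Complex.log (1 - z) := by
    refine tendsto_nhds_unique (habel.congr' ?_) hlim
    filter_upwards [Ioo_mem_nhdsLT (show (0 : ℝ) < 1 by norm_num)] with x hx
    have hn : ‖z * (x : ℂ)‖ < 1 := by
      rw [norm_mul, hz, one_mul, Complex.norm_real, Real.norm_of_nonneg hx.1.le]
      exact hx.2
    rw [← (Complex.hasSum_taylorSeries_neg_log hn).tsum_eq]
    refine tsum_congr fun n => ?_
    rw [mul_pow]; ring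
  rwa [← heq]

/-- The real part of the logarithm series at `exp (2πit)`, using `|1 - exp (2πit)| = 2 sin (πt)`. -/
lemma tendsto_cos_series {t : ℝ} (h0 : 0 < t) (h1 : t < 1) :
    Tendsto (fun N : ℕ => ∑ i ∈ range N, Real.cos (2 * Real.pi * t * (i + 1)) / (i + 1)) atTop
      (𝓝 (-Real.log (2 * Real.sin (Real.pi * t)))) := by
  have hs : 0 < Real.sin (Real.pi * t) :=
    Real.sin_pos_of_pos_of_lt_pi (by positivity) (by nlinarith [Real.pi_pos])
  set z : ℂ := Complex.exp (Complex.I * ((2 * Real.pi * t : ℝ) : ℂ)) with hzdef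
  have hnorm : ‖z - 1‖ = 2 * Real.sin (Real.pi * t) := by
    rw [hzdef, Complex.norm_exp_I_mul_ofReal_sub_one, Real.norm_of_nonneg] <;>
    rw [show 2 * Real.pi * t / 2 = Real.pi * t by ring]
    positivity
  have hz1 : z ≠ 1 := by
    intro h
    rw [h, sub_self, norm_zero] at hnorm
    linarith
  have h := (tendsto_log_series (Complex.norm_exp_I_mul_ofReal _) hz1)
  have h2 := (Complex.continuous_re.tendsto _).comp ((tendsto_add_atTop_iff_nat 1).2 h)
  rw [Complex.neg_re, Complex.log_re, norm_sub_rev, hnorm] at h2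
  refine h2.congr fun N => ?_
  simp only [Function.comp]
  rw [sum_range_succ', Complex.add_re, Complex.re_sum]
  simp only [Nat.cast_zero, div_zero, Complex.zero_re, add_zero]
  refine sum_congr rfl fun i _ => ?_
  rw [← Complex.exp_nat_mul, ← Complex.ofReal_natCast, Complex.div_ofReal_re,
    show ((↑(((i + 1 : ℕ) : ℝ)) : ℂ) * (Complex.I * ((2 * Real.pi * t : ℝ) : ℂ)))
      = ((2 * Real.pi * t * (i + 1) : ℝ) : ℂ) * Complex.I by push_cast; ring,
    Complex.exp_ofReal_mul_I_re]
  push_cast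
  rfl

lemma sum_cos_eq {m : ℕ} (hm : 0 < m) (k : ℤ) :
    ∑ r ∈ range m, Real.cos (2 * Real.pi * k * r / m) = if (m : ℤ) ∣ k then (m : ℝ) else 0 := by
  have hm0 : (m : ℝ) ≠ 0 := by positivity
  have hm0' : (m : ℂ) ≠ 0 := by exact_mod_cast hm.ne'
  split_ifs with h
  · obtain ⟨c, rfl⟩ := h
    have : ∀ r ∈ range m, Real.cos (2 * Real.pi * ((m * c : ℤ) : ℝ) * r / m) = 1 := by
      intro r _
      rw [← Real.cos_int_mul_two_pi (c * r)]
      congr 1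
      push_cast
      field_simp
    rw [sum_congr rfl this]
    simp
  · set w : ℂ := Complex.exp (2 * Real.pi * Complex.I * (k / m)) with hw
    have hw1 : w ≠ 1 := by
      intro h1
      rw [hw, Complex.exp_eq_one_iff] at h1
      obtain ⟨c, hc⟩ := h1
      apply h
      refine ⟨c, ?_⟩
      have h2 : (2 * Real.pi * Complex.I : ℂ) ≠ 0 := Complex.two_pi_I_ne_zero
      have h3 : (k : ℂ) / m = c := by
        apply mul_left_cancel₀ h2
        rw [hc]; ring
      rw [div_eq_iff hm0'] at h3
      have : k = c * m := by exact_mod_cast h3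
      rw [this, mul_comm]
    have hwm : w ^ m = 1 := by
      rw [hw, ← Complex.exp_nat_mul, Complex.exp_eq_one_iff]
      exact ⟨k, by field_simp⟩
    have hg : ∑ r ∈ range m, w ^ r = 0 := by
      rw [geom_sum_eq hw1, hwm, sub_self, zero_div]
    have := congrArg Complex.re hg
    rw [Complex.re_sum, Complex.zero_re] at this
    rw [← this]
    refine sum_congr rfl fun r _ => ?_
    rw [hw, ← Complex.exp_nat_mul,
      show (r : ℂ) * (2 * Real.pi * Complex.I * (k / m))
        = ((2 * Real.pi * k * r / m : ℝ) : ℂ) * Complex.I by push_cast; ring,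
      Complex.exp_ofReal_mul_I_re]

/-! ### The cosine transform of the digamma values -/

lemma sum_range_block (g : ℕ → ℝ) (m n : ℕ) :
    ∑ i ∈ range m, ∑ k ∈ range n, g (k * m + i) = ∑ l ∈ range (n * m), g l := by
  rw [sum_comm]
  induction n with
  | zero => simp
  | succ n ih => rw [sum_range_succ, ih, Nat.succ_mul, sum_range_add]

/-- The limit formula for `ψ`, summed over `x = (i + 1) / m` with cosine weights. Since
`1 / ((i + 1) / m + k) = m / (k m + i + 1)` and the weights have period `m`, the double sum over
`i` and `k` is a single sum over `l = k m + i`. -/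
lemma tendsto_cos_digamma {m : ℕ} (hm : 0 < m) (r : ℕ) :
    Tendsto (fun n : ℕ => Real.log n *
        ∑ i ∈ range m, Real.cos (2 * Real.pi * (r / m) * (i + 1))
        - m * ∑ l ∈ range (n * m), Real.cos (2 * Real.pi * (r / m) * (l + 1)) / (l + 1)) atTop
      (𝓝 (∑ i ∈ range m, Real.cos (2 * Real.pi * (r / m) * (i + 1)) *
        digamma (((i : ℝ) + 1) / m))) := by
  have hm0 : (0 : ℝ) < m := by exact_mod_cast hm
  have h : Tendsto (fun n : ℕ => ∑ i ∈ range m, Real.cos (2 * Real.pi * (r / m) * (i + 1)) *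
      (Real.log n - ∑ k ∈ range n, 1 / (((i : ℝ) + 1) / m + k))) atTop
      (𝓝 (∑ i ∈ range m, Real.cos (2 * Real.pi * (r / m) * (i + 1)) *
        digamma (((i : ℝ) + 1) / m))) :=
    tendsto_finsetSum _ fun i _ => (tendsto_digamma (by positivity)).const_mul _
  refine h.congr fun n => ?_
  rw [← sum_range_block (fun l => Real.cos (2 * Real.pi * (r / m) * (l + 1)) / (l + 1)),
    mul_sum, mul_sum, ← sum_sub_distrib]
  refine sum_congr rfl fun i _ => ?_
  rw [mul_sub, mul_comm (Real.log n), mul_sum, mul_sum]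
  congr 1
  refine sum_congr rfl fun k _ => ?_
  have hcos : Real.cos (2 * Real.pi * (r / m) * (((k * m + i : ℕ) : ℝ) + 1))
      = Real.cos (2 * Real.pi * (r / m) * (i + 1)) := by
    rw [← Real.cos_add_nat_mul_two_pi (2 * Real.pi * (r / m) * (i + 1)) (r * k)]
    congr 1
    push_cast
    field_simp
    ring
  rw [hcos]
  push_cast
  field_simp
  ring

lemma sum_digamma {m : ℕ} (hm : 0 < m) :
    ∑ i ∈ range m, digamma (((i : ℝ) + 1) / m)
      = m * (-Real.eulerMascheroniConstant - Real.log m) := by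
  have hm0 : (0 : ℝ) < m := by exact_mod_cast hm
  have h := tendsto_cos_digamma hm 0
  simp only [Nat.cast_zero, zero_div, mul_zero, zero_mul, Real.cos_zero, one_mul, sum_const,
    card_range, nsmul_eq_mul, mul_one] at h
  refine tendsto_nhds_unique h ?_
  have hmul : Tendsto (fun n : ℕ => n * m) atTop atTop :=
    tendsto_id.atTop_mul_const' hm
  have h2 := (((Real.tendsto_harmonic_sub_log.comp hmul).neg).sub_const (Real.log m)).const_mul
    (m : ℝ)
  refine h2.congr' ?_
  filter_upwards [eventually_gt_atTop 0] with n hn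
  have hn' : (0 : ℝ) < n := by exact_mod_cast hn
  simp only [Function.comp, harmonic]
  push_cast
  rw [Real.log_mul hn'.ne' hm0.ne']
  simp only [one_div]
  ring

lemma sum_cos_mul_digamma {m r : ℕ} (hr : 0 < r) (hrm : r < m) :
    ∑ i ∈ range m, Real.cos (2 * Real.pi * (r / m) * (i + 1)) * digamma (((i : ℝ) + 1) / m)
      = m * Real.log (2 * Real.sin (Real.pi * (r / m))) := by
  have hm : 0 < m := hr.trans hrm
  have hm0 : (0 : ℝ) < m := by exact_mod_cast hm
  have hr0 : (0 : ℝ) < r := by exact_mod_cast hr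
  have hz : ∑ i ∈ range m, Real.cos (2 * Real.pi * (r / m) * (i + 1)) = 0 := by
    have h1 := sum_cos_eq hm r
    rw [if_neg (by
      intro hd
      exact absurd (Nat.le_of_dvd hr (Int.natCast_dvd_natCast.1 hd)) (by omega))] at h1
    have h2 := sum_range_succ (fun i : ℕ => Real.cos (2 * Real.pi * (r / m) * i)) m
    rw [sum_range_succ'] at h2
    have h3 : Real.cos (2 * Real.pi * (r / m) * m) = 1 := by
      rw [← Real.cos_nat_mul_two_pi r]
      congr 1
      field_simp
    have h4 : ∑ i ∈ range m, Real.cos (2 * Real.pi * (r / m) * i) = 0 := by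
      rw [← h1]
      refine sum_congr rfl fun i _ => ?_
      congr 1
      push_cast
      ring
    rw [h3, h4] at h2
    simpa using h2
  have h := tendsto_cos_digamma hm r
  simp only [hz, mul_zero, zero_sub] at h
  refine tendsto_nhds_unique h ?_
  have hmul : Tendsto (fun n : ℕ => n * m) atTop atTop :=
    tendsto_id.atTop_mul_const' hm
  have h2 := (((tendsto_cos_series (t := r / m) (by positivity)
    ((div_lt_one hm0).2 (by exact_mod_cast hrm))).comp hmul).const_mul (m : ℝ)).neg
  simpa [Function.comp_def] using h2

/-- Orthogonality of the cosines. Both divisibility conditions may hold at once, as for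
`2 * j = m` and `i + 1 = j`. -/
lemma sum_cos_mul_cos {m j i : ℕ} (hm : 0 < m) :
    ∑ r ∈ range m, Real.cos (2 * Real.pi * j * r / m) * Real.cos (2 * Real.pi * (r / m) * (i + 1))
      = (m : ℝ) / 2 * ((if (m : ℤ) ∣ j - (i + 1) then 1 else 0)
        + (if (m : ℤ) ∣ j + (i + 1) then 1 else 0)) := by
  have h1 := sum_cos_eq hm ((j : ℤ) - (i + 1))
  have h2 := sum_cos_eq hm ((j : ℤ) + (i + 1))
  have h3 : ∑ r ∈ range m,
      Real.cos (2 * Real.pi * j * r / m) * Real.cos (2 * Real.pi * (r / m) * (i + 1))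
      = 1 / 2 * (∑ r ∈ range m, Real.cos (2 * Real.pi * ((j - (i + 1) : ℤ) : ℝ) * r / m)
        + ∑ r ∈ range m, Real.cos (2 * Real.pi * ((j + (i + 1) : ℤ) : ℝ) * r / m)) := by
    rw [← sum_add_distrib, mul_sum]
    refine sum_congr rfl fun r _ => ?_
    have e1 : 2 * Real.pi * ((j - (i + 1) : ℤ) : ℝ) * r / m
        = 2 * Real.pi * j * r / m - 2 * Real.pi * (r / m) * (i + 1) := by push_cast; ring
    have e2 : 2 * Real.pi * ((j + (i + 1) : ℤ) : ℝ) * r / m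
        = 2 * Real.pi * j * r / m + 2 * Real.pi * (r / m) * (i + 1) := by push_cast; ring
    rw [e1, e2, Real.cos_sub, Real.cos_add]
    ring
  rw [h3, h1, h2]
  split_ifs <;> ring

/-- The inverse cosine transform; the modulus is `M + 1`, and the frequency `0` is split off. -/
lemma digamma_add_digamma_one_sub {M j : ℕ} (hj1 : 1 ≤ j) (hjm : j ≤ M) :
    digamma ((j : ℝ) / (M + 1 : ℕ)) + digamma (1 - (j : ℝ) / (M + 1 : ℕ)) =
      2 * (-Real.eulerMascheroniConstant - Real.log (M + 1 : ℕ) + ∑ r ∈ range M,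
        Real.cos (2 * Real.pi * j * (r + 1 : ℕ) / (M + 1 : ℕ))
          * Real.log (2 * Real.sin (Real.pi * ((r + 1 : ℕ) / (M + 1 : ℕ))))) := by
  set m : ℕ := M + 1 with hmdef
  have hm : 0 < m := by omega
  have hm0 : (0 : ℝ) < m := by exact_mod_cast hm
  -- Transforming twice returns the even part of `i ↦ ψ (i / m)`: the surviving indices are
  -- `i + 1 = j` and `i + 1 = m - j`.
  have hA : ∑ r ∈ range m, Real.cos (2 * Real.pi * j * r / m) *
      ∑ i ∈ range m, Real.cos (2 * Real.pi * (r / m) * (i + 1)) * digamma (((i : ℝ) + 1) / m)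
      = m / 2 * (digamma ((j : ℝ) / m) + digamma (1 - (j : ℝ) / m)) := by
    simp_rw [mul_sum]
    rw [sum_comm]
    simp_rw [← mul_assoc, ← sum_mul, sum_cos_mul_cos hm]
    have e : ∀ i ∈ range m, (m : ℝ) / 2 * ((if (m : ℤ) ∣ j - (i + 1) then 1 else 0)
        + (if (m : ℤ) ∣ j + (i + 1) then 1 else 0)) * digamma (((i : ℝ) + 1) / m)
        = m / 2 * ((if i = j - 1 then digamma (((i : ℝ) + 1) / m) else 0)
          + (if i = m - j - 1 then digamma (((i : ℝ) + 1) / m) else 0)) := by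
      intro i hi
      rw [mem_range] at hi
      have c1 : (m : ℤ) ∣ j - (i + 1) ↔ i = j - 1 := by
        constructor
        · intro hd
          have := Int.eq_zero_of_abs_lt_dvd hd (by rw [abs_lt]; omega)
          omega
        · rintro rfl
          have : (j : ℤ) - ((j - 1 : ℕ) + 1) = 0 := by omega
          rw [this]; exact dvd_zero _
      have c2 : (m : ℤ) ∣ j + (i + 1) ↔ i = m - j - 1 := by
        constructor
        · intro hd
          have := Int.eq_zero_of_abs_lt_dvd (hd.sub (dvd_refl _)) (by rw [abs_lt]; omega)
          omega
        · rintro rfl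
          have : (j : ℤ) + ((m - j - 1 : ℕ) + 1) = m := by omega
          rw [this]
      simp only [c1, c2]
      split_ifs <;> ring
    rw [sum_congr rfl e, ← mul_sum, sum_add_distrib, sum_ite_eq', sum_ite_eq',
      if_pos (mem_range.2 (by omega)), if_pos (mem_range.2 (by omega))]
    have f1 : ((j - 1 : ℕ) : ℝ) + 1 = j := by
      exact_mod_cast (by omega : j - 1 + 1 = j)
    have f2 : ((m - j - 1 : ℕ) : ℝ) + 1 = m - j := by
      rw [eq_sub_iff_add_eq]
      exact_mod_cast (by omega : m - j - 1 + 1 + j = m)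
    rw [f1, f2, sub_div, div_self hm0.ne']
  rw [hmdef, sum_range_succ', ← hmdef] at hA
  have hB : ∀ r ∈ range M, Real.cos (2 * Real.pi * j * (r + 1 : ℕ) / m) *
      ∑ i ∈ range m, Real.cos (2 * Real.pi * ((r + 1 : ℕ) / m) * (i + 1))
        * digamma (((i : ℝ) + 1) / m)
      = m * (Real.cos (2 * Real.pi * j * (r + 1 : ℕ) / m)
        * Real.log (2 * Real.sin (Real.pi * ((r + 1 : ℕ) / m)))) := by
    intro r hr
    rw [mem_range] at hr
    rw [sum_cos_mul_digamma (by omega) (by omega)]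
    ring
  rw [sum_congr rfl hB, ← mul_sum] at hA
  simp only [Nat.cast_zero, zero_div, mul_zero, zero_mul, Real.cos_zero, one_mul,
    sum_digamma hm] at hA
  rw [← mul_add] at hA
  have hA' := mul_left_cancel₀ hm0.ne' (hA.trans (by ring :
    _ = (m : ℝ) * ((digamma ((j : ℝ) / m) + digamma (1 - (j : ℝ) / m)) / 2)))
  linarith

lemma sum_cos_mul_log_sin {M j : ℕ} (hj1 : 1 ≤ j) (hjm : j ≤ M) :
    ∑ r ∈ range M, Real.cos (2 * Real.pi * j * (r + 1 : ℕ) / (M + 1 : ℕ))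
        * Real.log (2 * Real.sin (Real.pi * ((r + 1 : ℕ) / (M + 1 : ℕ))))
      = -Real.log (2 * Real.pi) - 2 * ∑ r ∈ range M,
        Real.cos (2 * Real.pi * j * (r + 1 : ℕ) / (M + 1 : ℕ))
          * Real.log (Real.Gamma ((r + 1 : ℕ) / (M + 1 : ℕ))) := by
  set m : ℕ := M + 1 with hmdef
  have hm : 0 < m := by omega
  have hm0 : (0 : ℝ) < m := by exact_mod_cast hm
  have hcos : ∑ r ∈ range M, Real.cos (2 * Real.pi * j * (r + 1 : ℕ) / m) = -1 := by
    have h1 := sum_cos_eq hm j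
    rw [if_neg (by
      intro hd
      exact absurd (Nat.le_of_dvd hj1 (Int.natCast_dvd_natCast.1 hd)) (by omega)),
      hmdef, sum_range_succ', ← hmdef] at h1
    simp only [Nat.cast_zero, mul_zero, zero_div, Real.cos_zero, Int.cast_natCast] at h1
    linarith
  -- The substitution `r ↦ m - r` preserves the cosine weights.
  have hrefl : ∑ r ∈ range M, Real.cos (2 * Real.pi * j * (r + 1 : ℕ) / m)
        * Real.log (Real.Gamma (1 - (r + 1 : ℕ) / m))
      = ∑ r ∈ range M, Real.cos (2 * Real.pi * j * (r + 1 : ℕ) / m)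
        * Real.log (Real.Gamma ((r + 1 : ℕ) / m)) := by
    rw [← sum_range_reflect (fun r : ℕ => Real.cos (2 * Real.pi * j * (r + 1 : ℕ) / m)
        * Real.log (Real.Gamma ((r + 1 : ℕ) / m)))]
    refine sum_congr rfl fun r hr => ?_
    rw [mem_range] at hr
    have e : ((M - 1 - r + 1 : ℕ) : ℝ) = m - (r + 1 : ℕ) := by
      rw [eq_sub_iff_add_eq]
      exact_mod_cast (by omega : M - 1 - r + 1 + (r + 1) = m)
    rw [e, sub_div, div_self hm0.ne', ← Real.cos_nat_mul_two_pi_sub _ j]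
    congr 2
    field_simp
  have hterm : ∀ r ∈ range M, Real.cos (2 * Real.pi * j * (r + 1 : ℕ) / m)
        * Real.log (2 * Real.sin (Real.pi * ((r + 1 : ℕ) / m)))
      = Real.cos (2 * Real.pi * j * (r + 1 : ℕ) / m) * Real.log (2 * Real.pi)
        - (Real.cos (2 * Real.pi * j * (r + 1 : ℕ) / m)
            * Real.log (Real.Gamma ((r + 1 : ℕ) / m))
          + Real.cos (2 * Real.pi * j * (r + 1 : ℕ) / m)
            * Real.log (Real.Gamma (1 - (r + 1 : ℕ) / m))) := by
    intro r hr
    rw [mem_range] at hr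
    set x : ℝ := ((r + 1 : ℕ) : ℝ) / m with hx
    have hx0 : 0 < x := by positivity
    have hx1 : x < 1 := (div_lt_one hm0).2 (by exact_mod_cast (by omega : r + 1 < m))
    have hs : 0 < Real.sin (Real.pi * x) :=
      Real.sin_pos_of_pos_of_lt_pi (by positivity) (by nlinarith [Real.pi_pos])
    have hG : Real.log (Real.Gamma x) + Real.log (Real.Gamma (1 - x))
        = Real.log Real.pi - Real.log (Real.sin (Real.pi * x)) := by
      rw [← Real.log_mul (Real.Gamma_pos_of_pos hx0).ne'
        (Real.Gamma_pos_of_pos (by linarith)).ne', Real.Gamma_mul_Gamma_one_sub,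
        Real.log_div Real.pi_ne_zero hs.ne']
    rw [← mul_add, hG, ← mul_sub, Real.log_mul two_ne_zero hs.ne',
      Real.log_mul two_ne_zero Real.pi_ne_zero]
    ring
  rw [sum_congr rfl hterm, sum_sub_distrib, sum_add_distrib, ← sum_mul, hcos, hrefl]
  ring

theorem gauss_digamma (m j : ℕ) (hm : 2 ≤ m) (hj1 : 1 ≤ j) (hjm : j ≤ m - 1) :
    digamma ((j : ℝ) / m) =
      -Real.eulerMascheroniConstant - Real.log (2 * Real.pi * m)
        - (Real.pi / 2) * Real.cot (Real.pi * j / m)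
        - 2 * ∑ r ∈ Finset.Icc 1 (m - 1),
            Real.cos (2 * Real.pi * j * r / m) * Real.log (Real.Gamma ((r : ℝ) / m)) := by
  obtain ⟨M, rfl⟩ : ∃ M, m = M + 1 := ⟨m - 1, by omega⟩
  rw [Nat.add_sub_cancel] at hjm ⊢
  have hm0 : (0 : ℝ) < (M + 1 : ℕ) := by positivity
  have hj0 : (0 : ℝ) < j := by exact_mod_cast hj1
  have hadd := digamma_add_digamma_one_sub hj1 hjm
  have hsub := digamma_reflection (x := (j : ℝ) / (M + 1 : ℕ)) (by positivity)
    ((div_lt_one hm0).2 (by exact_mod_cast (by omega : j < M + 1)))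
  rw [sum_cos_mul_log_sin hj1 hjm] at hadd
  have hsum : ∑ r ∈ Finset.Icc 1 M, Real.cos (2 * Real.pi * j * r / (M + 1 : ℕ))
        * Real.log (Real.Gamma ((r : ℝ) / (M + 1 : ℕ)))
      = ∑ r ∈ range M, Real.cos (2 * Real.pi * j * (r + 1 : ℕ) / (M + 1 : ℕ))
        * Real.log (Real.Gamma ((r + 1 : ℕ) / (M + 1 : ℕ))) := by
    rw [show Finset.Icc 1 M = Finset.Ico 1 (M + 1) by ext; simp,
      Finset.sum_Ico_eq_sum_range]
    refine sum_congr rfl fun r _ => ?_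
    rw [add_comm 1 r]
  rw [hsum, Real.log_mul (by positivity) hm0.ne', mul_div_assoc]
  linarith
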